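/- Let (Ω, 𝓕, ℙ) be a probability space, v > 0, X : Ω → ℝ an integrable random variable, and Z : Ω → ℝ a random variable independent of X with law gaussianReal 0 v. Set R = X + Z, let φ_v denote the density of gaussianReal 0 v with respect to Lebesgue measure, and define q(r) = ∫ φ_v(r − x) d(law of X)(x). Then the posterior mean of the noise satisfies E[Z | σ(R)] = −v·(q'(R)/q(R)) ℙ-almost surely; that is, the conditional expectation of the Gaussian noise given the noisy observation equals minus v times the score of the marginal density of R. -/

import Mathlib

open MeasureTheory ProbabilityTheory

/-!
Write `f` for the noise density and `μ` for the law of `X`. The pair `(X, X + Z)` has density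
`(x, r) ↦ f (r - x)` with respect to `μ ⊗ dr`, so Bayes' formula gives
`E[Z | X + Z = r] = ∫ (r - x) f (r - x) dμ(x) / ∫ f (r - x) dμ(x)`.
A Gaussian density of mean `m` and variance `v` satisfies `z f(z) = m f(z) - v f'(z)`, and `f'` is
bounded, so differentiating under the integral turns the numerator into `m q(r) - v q'(r)`, where
`q(r)` is the denominator.
-/

open scoped ENNReal NNReal

section WithDensityOfReal

variable {α E : Type*} [MeasurableSpace α] [NormedAddCommGroup E] [NormedSpace ℝ E]
  {μ : Measure α} {f : α → ℝ}

lemma integrable_withDensity_ofReal_iff (hf : AEMeasurable f μ) (hf_nonneg : 0 ≤ f) {g : α → E} :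
    Integrable g (μ.withDensity fun a ↦ ENNReal.ofReal (f a)) ↔
      Integrable (fun a ↦ f a • g a) μ := by
  rw [integrable_withDensity_iff_integrable_smul₀' hf.ennreal_ofReal
    (ae_of_all _ fun _ ↦ ENNReal.ofReal_lt_top)]
  simp only [ENNReal.toReal_ofReal (hf_nonneg _)]

lemma setIntegral_withDensity_ofReal (hf : AEMeasurable f μ) (hf_nonneg : 0 ≤ f) (g : α → E)
    {s : Set α} (hs : MeasurableSet s) :
    ∫ a in s, g a ∂(μ.withDensity fun a ↦ ENNReal.ofReal (f a)) = ∫ a in s, f a • g a ∂μ := by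
  rw [setIntegral_withDensity_eq_setIntegral_toReal_smul₀ hf.restrict.ennreal_ofReal
    (ae_of_all _ fun _ ↦ ENNReal.ofReal_lt_top) g hs]
  simp only [ENNReal.toReal_ofReal (hf_nonneg _)]

lemma integral_smul_inv_integral_smul (hf : Integrable f μ) (hf_nonneg : 0 ≤ f) (g : α → E) :
    (∫ a, f a ∂μ) • (∫ a, f a ∂μ)⁻¹ • ∫ a, f a • g a ∂μ = ∫ a, f a • g a ∂μ := by
  by_cases hf_zero : ∫ a, f a ∂μ = 0
  · have hf_ae : f =ᵐ[μ] 0 := (integral_eq_zero_iff_of_nonneg hf_nonneg hf).1 hf_zero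
    have hfg_ae : (fun a ↦ f a • g a) =ᵐ[μ] 0 := hf_ae.mono fun a ha ↦ by simp [ha]
    simp [integral_congr_ae hfg_ae]
  · exact smul_inv_smul₀ hf_zero _

end WithDensityOfReal

section Bayes

variable {α β E : Type*} [MeasurableSpace α] [MeasurableSpace β]
  [NormedAddCommGroup E] [NormedSpace ℝ E]
  {μ : Measure α} {ν : Measure β} [SFinite μ] [SFinite ν] {p : α × β → ℝ}

lemma map_snd_prod_withDensity_ofReal (hp : Integrable p (μ.prod ν)) (hp_nonneg : 0 ≤ p) :
    ((μ.prod ν).withDensity fun z ↦ ENNReal.ofReal (p z)).map Prod.snd =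
      ν.withDensity fun b ↦ ENNReal.ofReal (∫ a, p (a, b) ∂μ) := by
  ext s hs
  rw [Measure.map_apply measurable_snd hs, withDensity_apply _ (measurable_snd hs),
    withDensity_apply _ hs, ← Set.univ_prod,
    setLIntegral_prod_symm _ hp.1.aemeasurable.restrict.ennreal_ofReal, Measure.restrict_univ]
  refine lintegral_congr_ae (ae_restrict_of_ae ?_)
  filter_upwards [hp.prod_left_ae] with b hb
  exact (ofReal_integral_eq_lintegral_ofReal hb (ae_of_all _ fun a ↦ hp_nonneg (a, b))).symm

lemma setIntegral_preimage_snd {F : α × β → E} (hF : Integrable F (μ.prod ν)) (s : Set β) :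
    ∫ z in Prod.snd ⁻¹' s, F z ∂(μ.prod ν) = ∫ b in s, ∫ a, F (a, b) ∂μ ∂ν := by
  have hrestrict : (μ.prod ν).restrict (Prod.snd ⁻¹' s) = μ.prod (ν.restrict s) := by
    rw [← Set.univ_prod, ← Measure.prod_restrict, Measure.restrict_univ]
  have hF_restrict : Integrable F (μ.prod (ν.restrict s)) := hrestrict ▸ hF.integrableOn
  rw [hrestrict, integral_prod_symm _ hF_restrict]

variable {Ω : Type*} {mΩ : MeasurableSpace Ω} {P : Measure Ω} {U : Ω → α} {V : Ω → β}

theorem condExp_comap_ae_eq_of_hasLaw_withDensity [CompleteSpace E]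
    (hp : Integrable p (μ.prod ν)) (hp_nonneg : 0 ≤ p) (hV : Measurable V)
    (hUV : HasLaw (fun ω ↦ (U ω, V ω)) ((μ.prod ν).withDensity fun z ↦ ENNReal.ofReal (p z)) P)
    {k : α × β → E} (hk : Integrable k ((μ.prod ν).withDensity fun z ↦ ENNReal.ofReal (p z))) :
    P[fun ω ↦ k (U ω, V ω) | MeasurableSpace.comap V inferInstance] =ᵐ[P]
      fun ω ↦ (∫ a, p (a, V ω) ∂μ)⁻¹ • ∫ a, p (a, V ω) • k (a, V ω) ∂μ := by
  have : IsFiniteMeasure ((μ.prod ν).withDensity fun z ↦ ENNReal.ofReal (p z)) :=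
    isFiniteMeasure_withDensity_ofReal hp.2
  have : IsFiniteMeasure P := hUV.isFiniteMeasure
  set q : β → ℝ := fun b ↦ ∫ a, p (a, b) ∂μ
  set N : β → E := fun b ↦ ∫ a, p (a, b) • k (a, b) ∂μ
  have hq : AEMeasurable q ν := hp.integral_prod_right.1.aemeasurable
  have hq_nonneg : 0 ≤ q := fun b ↦ integral_nonneg fun a ↦ hp_nonneg (a, b)
  have hV_law : HasLaw V (ν.withDensity fun b ↦ ENNReal.ofReal (q b)) P :=
    HasLaw.comp (Y := Prod.snd) { map_eq := map_snd_prod_withDensity_ofReal hp hp_nonneg } hUV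
  have hpk : Integrable (fun z ↦ p z • k z) (μ.prod ν) :=
    (integrable_withDensity_ofReal_iff hp.1.aemeasurable hp_nonneg).1 hk
  have hqN : (fun b ↦ q b • (q b)⁻¹ • N b) =ᵐ[ν] N := by
    filter_upwards [hp.prod_left_ae] with b hb
    exact integral_smul_inv_integral_smul hb (Pi.le_def.2 fun a ↦ hp_nonneg (a, b)) _
  have hg : Integrable (fun b ↦ (q b)⁻¹ • N b) (P.map V) := by
    rw [hV_law.map_eq, integrable_withDensity_ofReal_iff hq hq_nonneg]
    exact hpk.integral_prod_right.congr hqN.symm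
  refine (ae_eq_condExp_of_forall_setIntegral_eq hV.comap_le
    ((hUV.map_eq.symm ▸ hk).comp_aemeasurable hUV.aemeasurable)
    (fun _ _ _ ↦ (hg.comp_measurable hV).integrableOn) ?_
    (hg.1.comp_ae_measurable' hV.aemeasurable)).symm
  rintro _ ⟨s, hs, rfl⟩ -
  calc ∫ ω in V ⁻¹' s, (q (V ω))⁻¹ • N (V ω) ∂P
      = ∫ b in s, (q b)⁻¹ • N b ∂(P.map V) := (setIntegral_map hs hg.1 hV.aemeasurable).symm
    _ = ∫ b in s, q b • (q b)⁻¹ • N b ∂ν := by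
        rw [hV_law.map_eq, setIntegral_withDensity_ofReal hq hq_nonneg _ hs]
    _ = ∫ b in s, N b ∂ν := integral_congr_ae (ae_restrict_of_ae hqN)
    _ = ∫ z in Prod.snd ⁻¹' s, p z • k z ∂(μ.prod ν) := (setIntegral_preimage_snd hpk s).symm
    _ = ∫ z in Prod.snd ⁻¹' s, k z ∂(P.map fun ω ↦ (U ω, V ω)) := by
        rw [hUV.map_eq, setIntegral_withDensity_ofReal hp.1.aemeasurable hp_nonneg _
          (measurable_snd hs)]
    _ = ∫ ω in V ⁻¹' s, k (U ω, V ω) ∂P :=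
        setIntegral_map (measurable_snd hs) (hUV.map_eq.symm ▸ hk.1) hUV.aemeasurable

end Bayes

/-- The convolution `f ∗ μ` of a function with a measure. If `X` has law `μ` and is independent of
`Z` with density `f`, then `convMeasure f μ` is the density of `X + Z`. -/
noncomputable def convMeasure {G E : Type*} [AddCommGroup G] [MeasurableSpace G]
    [NormedAddCommGroup E] [NormedSpace ℝ E] (f : G → E) (μ : Measure G) (r : G) : E :=
  ∫ x, f (r - x) ∂μ

section AdditiveNoise

variable {G E : Type*} [AddCommGroup G] [MeasurableSpace G] [MeasurableAdd₂ G] [MeasurableNeg G]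
  [NormedAddCommGroup E] {μ ν : Measure G} [SFinite ν] [ν.IsAddLeftInvariant]

lemma measurePreserving_prod_sub_fst [SFinite μ] :
    MeasurePreserving (fun z : G × G ↦ (z.1, z.2 - z.1)) (μ.prod ν) (μ.prod ν) := by
  simpa only [sub_eq_neg_add] using measurePreserving_prod_neg_add μ ν

lemma integrable_comp_snd_sub_fst [IsFiniteMeasure μ] {f : G → E} (hf : Integrable f ν) :
    Integrable (fun z : G × G ↦ f (z.2 - z.1)) (μ.prod ν) :=
  measurePreserving_prod_sub_fst.integrable_comp_of_integrable (hf.comp_snd μ)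

lemma map_prodMk_add_prod_withDensity [SFinite μ] {f : G → ℝ≥0∞} (hf : AEMeasurable f ν) :
    (μ.prod (ν.withDensity f)).map (fun z ↦ (z.1, z.1 + z.2)) =
      (μ.prod ν).withDensity fun z ↦ f (z.2 - z.1) := by
  have hshear := measurePreserving_prod_add μ ν
  ext s hs
  rw [prod_withDensity_right₀ hf, Measure.map_apply hshear.measurable hs,
    withDensity_apply _ (hshear.measurable hs), withDensity_apply _ hs,
    ← hshear.setLIntegral_comp_preimage_emb
      (MeasurableEquiv.shearAddRight G).measurableEmbedding (fun z ↦ f (z.2 - z.1)) s]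
  simp only [add_sub_cancel_left]

variable {Ω : Type*} {mΩ : MeasurableSpace Ω} {P : Measure Ω} {X Z : Ω → G}

lemma hasLaw_prodMk_add_of_indepFun [IsFiniteMeasure P] {f : G → ℝ≥0∞} (hf : AEMeasurable f ν)
    (hX : HasLaw X μ P) (hZ : HasLaw Z (ν.withDensity f) P) (hXZ : IndepFun X Z P) :
    HasLaw (fun ω ↦ (X ω, X ω + Z ω)) ((μ.prod ν).withDensity fun z ↦ f (z.2 - z.1)) P := by
  have : IsFiniteMeasure μ := hX.map_eq ▸ inferInstance
  exact HasLaw.comp (Y := fun z : G × G ↦ (z.1, z.1 + z.2))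
    { map_eq := map_prodMk_add_prod_withDensity hf } (hXZ.hasLaw_prod hX hZ)

theorem condExp_noise_ae_eq_convMeasure [NormedSpace ℝ E] [CompleteSpace E] {f : G → ℝ}
    (hf : Integrable f ν) (hf_nonneg : 0 ≤ f) (hX : AEMeasurable X P)
    (hR : Measurable fun ω ↦ X ω + Z ω)
    (hZ : HasLaw Z (ν.withDensity fun z ↦ ENNReal.ofReal (f z)) P) (hXZ : IndepFun X Z P)
    {g : G → E} (hg : Integrable g (ν.withDensity fun z ↦ ENNReal.ofReal (f z))) :
    P[fun ω ↦ g (Z ω) | MeasurableSpace.comap (fun ω ↦ X ω + Z ω) inferInstance] =ᵐ[P]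
      fun ω ↦ (convMeasure f (P.map X) (X ω + Z ω))⁻¹ •
        convMeasure (fun z ↦ f z • g z) (P.map X) (X ω + Z ω) := by
  have : IsFiniteMeasure (ν.withDensity fun z ↦ ENNReal.ofReal (f z)) :=
    isFiniteMeasure_withDensity_ofReal hf.2
  have : IsFiniteMeasure P := hZ.isFiniteMeasure
  have hp : Integrable (fun z : G × G ↦ f (z.2 - z.1)) ((P.map X).prod ν) :=
    integrable_comp_snd_sub_fst hf
  have hp_nonneg : (0 : G × G → ℝ) ≤ fun z ↦ f (z.2 - z.1) := fun _ ↦ hf_nonneg _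
  have hfg : Integrable (fun z ↦ f z • g z) ν :=
    (integrable_withDensity_ofReal_iff hf.1.aemeasurable hf_nonneg).1 hg
  have hk : Integrable (fun z : G × G ↦ g (z.2 - z.1))
      (((P.map X).prod ν).withDensity fun z ↦ ENNReal.ofReal (f (z.2 - z.1))) :=
    (integrable_withDensity_ofReal_iff hp.1.aemeasurable hp_nonneg).2
      (integrable_comp_snd_sub_fst hfg)
  have hlaw := hasLaw_prodMk_add_of_indepFun hf.1.aemeasurable.ennreal_ofReal
    ⟨hX, rfl⟩ hZ hXZ
  simpa only [add_sub_cancel_left, convMeasure] using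
    condExp_comap_ae_eq_of_hasLaw_withDensity hp hp_nonneg hR hlaw hk

end AdditiveNoise

theorem hasDerivAt_convMeasure {E : Type*} [NormedAddCommGroup E] [NormedSpace ℝ E]
    [CompleteSpace E] {μ : Measure ℝ} [IsFiniteMeasure μ]
    {f f' : ℝ → E} {C r : ℝ} (hf : ∀ z, HasDerivAt f (f' z) z) (hf' : ∀ z, ‖f' z‖ ≤ C)
    (hint : Integrable (fun x ↦ f (r - x)) μ) :
    HasDerivAt (convMeasure f μ) (convMeasure f' μ r) r := by
  have hf_cont : Continuous f := continuous_iff_continuousAt.2 fun z ↦ (hf z).continuousAt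
  have hf'_meas : StronglyMeasurable f' := by
    have : deriv f = f' := funext fun z ↦ (hf z).deriv
    exact this ▸ stronglyMeasurable_deriv f
  exact (hasDerivAt_integral_of_dominated_loc_of_deriv_le (F := fun r x ↦ f (r - x))
    (F' := fun r x ↦ f' (r - x)) (bound := fun _ ↦ C) Filter.univ_mem
    (Filter.Eventually.of_forall fun r ↦ (by fun_prop : Continuous _).aestronglyMeasurable) hint
    (hf'_meas.comp_measurable (by fun_prop)).aestronglyMeasurable
    (ae_of_all _ fun x r _ ↦ hf' (r - x)) (integrable_const C)
    (ae_of_all _ fun x r _ ↦ (hf (r - x)).comp_sub_const r x)).2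

section Gaussian

variable (m : ℝ) (v : ℝ≥0)

lemma gaussianPDFReal_le (z : ℝ) : gaussianPDFReal m v z ≤ (√(2 * Real.pi * v))⁻¹ := by
  refine mul_le_of_le_one_right (by positivity) (Real.exp_le_one_iff.2 ?_)
  exact div_nonpos_of_nonpos_of_nonneg (neg_nonpos.2 (sq_nonneg _)) (by positivity)

lemma hasDerivAt_gaussianPDFReal (z : ℝ) :
    HasDerivAt (gaussianPDFReal m v) (-((z - m) / v) * gaussianPDFReal m v z) z := by
  have hexponent : HasDerivAt (fun x ↦ -(x - m) ^ 2 / (2 * v)) (-((z - m) / v)) z := by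
    convert! ((((hasDerivAt_id z).sub_const m).pow 2).neg.div_const (2 * (v : ℝ))) using 1
    simp [neg_div, mul_div_mul_left]
  exact (hexponent.exp.const_mul _).congr_deriv (by rw [gaussianPDFReal]; ring)

lemma abs_mul_exp_neg_sq_half_le_one (t : ℝ) : |t| * Real.exp (-(t ^ 2 / 2)) ≤ 1 := by
  have hexp : t ^ 2 / 2 + 1 ≤ Real.exp (t ^ 2 / 2) := Real.add_one_le_exp _
  rw [Real.exp_neg, ← div_eq_mul_inv, div_le_one (Real.exp_pos _)]
  nlinarith [sq_nonneg (|t| - 1), sq_abs t]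

lemma norm_deriv_gaussianPDFReal_le (z : ℝ) :
    ‖-((z - m) / v) * gaussianPDFReal m v z‖ ≤ (√(2 * Real.pi * v))⁻¹ * (√v)⁻¹ := by
  set t : ℝ := (z - m) / √v with ht
  have hlinear : (z - m) / v = t * (√v)⁻¹ := by
    rw [ht, ← div_eq_mul_inv, div_div, Real.mul_self_sqrt v.coe_nonneg]
  have hquadratic : -(z - m) ^ 2 / (2 * v) = -(t ^ 2 / 2) := by
    rw [ht, div_pow, Real.sq_sqrt v.coe_nonneg]; ring
  calc ‖-((z - m) / v) * gaussianPDFReal m v z‖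
      = (√(2 * Real.pi * v))⁻¹ * (√v)⁻¹ * (|t| * Real.exp (-(t ^ 2 / 2))) := by
        rw [norm_mul, norm_neg, Real.norm_of_nonneg (gaussianPDFReal_nonneg m v z), hlinear,
          gaussianPDFReal, hquadratic, Real.norm_eq_abs, abs_mul,
          abs_of_nonneg (by positivity : 0 ≤ (√(v : ℝ))⁻¹)]
        ring
    _ ≤ (√(2 * Real.pi * v))⁻¹ * (√v)⁻¹ :=
        mul_le_of_le_one_right (by positivity) (abs_mul_exp_neg_sq_half_le_one t)

variable (μ : Measure ℝ) [IsFiniteMeasure μ] (r : ℝ)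

lemma integrable_gaussianPDFReal_sub : Integrable (fun x ↦ gaussianPDFReal m v (r - x)) μ := by
  refine Integrable.of_bound (by fun_prop : Measurable _).aestronglyMeasurable
    (√(2 * Real.pi * v))⁻¹ (ae_of_all _ fun x ↦ ?_)
  rw [Real.norm_of_nonneg (gaussianPDFReal_nonneg m v _)]
  exact gaussianPDFReal_le m v _

lemma deriv_convMeasure_gaussianPDFReal :
    deriv (convMeasure (gaussianPDFReal m v) μ) r =
      convMeasure (fun z ↦ -((z - m) / v) * gaussianPDFReal m v z) μ r :=
  (hasDerivAt_convMeasure (hasDerivAt_gaussianPDFReal m v) (norm_deriv_gaussianPDFReal_le m v)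
    (integrable_gaussianPDFReal_sub m v μ r)).deriv

variable {v}

lemma convMeasure_gaussianPDFReal_pos [NeZero μ] (hv : v ≠ 0) :
    0 < convMeasure (gaussianPDFReal m v) μ r := by
  refine (integral_pos_iff_support_of_nonneg (fun x ↦ gaussianPDFReal_nonneg m v (r - x))
    (integrable_gaussianPDFReal_sub m v μ r)).2 ?_
  have hsupport : Function.support (fun x ↦ gaussianPDFReal m v (r - x)) = Set.univ :=
    Set.eq_univ_of_forall fun x ↦ (gaussianPDFReal_pos m v (r - x) hv).ne'
  rw [hsupport]
  exact NeZero.pos _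

lemma convMeasure_gaussianPDFReal_mul_id (hv : v ≠ 0) :
    convMeasure (fun z ↦ gaussianPDFReal m v z * z) μ r =
      m * convMeasure (gaussianPDFReal m v) μ r -
        v * deriv (convMeasure (gaussianPDFReal m v) μ) r := by
  have hderiv_int :
      Integrable (fun x ↦ -((r - x - m) / v) * gaussianPDFReal m v (r - x)) μ :=
    Integrable.of_bound (by fun_prop : Measurable _).aestronglyMeasurable _
      (ae_of_all _ fun x ↦ norm_deriv_gaussianPDFReal_le m v _)
  rw [deriv_convMeasure_gaussianPDFReal, convMeasure, convMeasure, convMeasure,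
    ← integral_const_mul, ← integral_const_mul,
    ← integral_sub ((integrable_gaussianPDFReal_sub m v μ r).const_mul m)
      (hderiv_int.const_mul v)]
  congr 1 with x
  have : (v : ℝ) ≠ 0 := NNReal.coe_ne_zero.2 hv
  field_simp
  ring

end Gaussian

theorem noise_posterior_mean_eq_neg_score_general {Ω : Type*} {mΩ : MeasurableSpace Ω}
    {P : Measure Ω} {m : ℝ} {v : ℝ≥0} (hv : v ≠ 0) {X Z : Ω → ℝ} (hX : AEMeasurable X P)
    (hR : Measurable fun ω ↦ X ω + Z ω) (hZ : HasLaw Z (gaussianReal m v) P)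
    (hXZ : IndepFun X Z P) :
    P[Z | MeasurableSpace.comap (fun ω ↦ X ω + Z ω) inferInstance] =ᵐ[P]
      fun ω ↦ m - v * logDeriv (convMeasure (gaussianPDFReal m v) (P.map X)) (X ω + Z ω) := by
  have : IsProbabilityMeasure P := hZ.isProbabilityMeasure
  have : IsProbabilityMeasure (P.map X) := Measure.isProbabilityMeasure_map hX
  have hid : Integrable id (gaussianReal m v) := (memLp_id_gaussianReal 1).integrable le_rfl
  rw [gaussianReal_of_var_ne_zero m hv] at hZ hid
  filter_upwards [condExp_noise_ae_eq_convMeasure (integrable_gaussianPDFReal m v)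
    (gaussianPDFReal_nonneg m v) hX hR hZ hXZ hid] with ω hω
  have hq_ne : convMeasure (gaussianPDFReal m v) (P.map X) (X ω + Z ω) ≠ 0 :=
    (convMeasure_gaussianPDFReal_pos m _ _ hv).ne'
  refine hω.trans ?_
  simp only [id, smul_eq_mul, convMeasure_gaussianPDFReal_mul_id m _ _ hv, logDeriv_apply]
  field_simp

/-- Noise-posterior-mean identity underlying denoising score matching: for
`R = X + Z` with `Z ~ N(0, v)` independent of `X`, and `q` the marginal density
of `R`, the posterior mean of the noise satisfies
`E[Z | σ(R)] = −v·q'(R)/q(R)` almost surely. -/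
theorem noise_posterior_mean_eq_neg_score
    {Ω : Type*} [MeasureSpace Ω] [IsProbabilityMeasure (ℙ : Measure Ω)]
    (v : ℝ) (hv : 0 < v)
    (X Z : Ω → ℝ) (hX : Measurable X) (hZ : Measurable Z)
    (hXint : Integrable X ℙ)
    (hZlaw : Measure.map Z ℙ = gaussianReal 0 ⟨v, hv.le⟩)
    (hindep : IndepFun X Z ℙ)
    (R : Ω → ℝ) (hR : R = fun ω => X ω + Z ω)
    (q : ℝ → ℝ)
    (hq : q = fun r => ∫ x, gaussianPDFReal 0 ⟨v, hv.le⟩ (r - x) ∂(Measure.map X ℙ)) :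
    ℙ[Z | MeasurableSpace.comap R Real.measurableSpace]
      =ᵐ[ℙ] fun ω => -v * (deriv q (R ω) / q (R ω)) := by
  subst hR hq
  simpa only [zero_sub, neg_mul] using! noise_posterior_mean_eq_neg_score_general
    (v := ⟨v, hv.le⟩) (NNReal.coe_ne_zero.1 hv.ne') hX.aemeasurable (hX.add hZ)
    ⟨hZ.aemeasurable, hZlaw⟩ hindep
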